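/- Suppose the Laplace exponent Φ of a driftless subordinator is regularly varying at infinity with index α ∈ (0,1), Φ(λ) ~ λ^α F(λ) with F slowly varying, and suppose L(t,δ)/μ(δ) → t almost surely where μ(δ) = δ^{−1}∫₀^δ Π̄(x)dx. Then almost surely, as δ → 0, L(t,δ) ~ t δ^{−α} F(1/δ)/Γ(2−α). -/

import Mathlib

open MeasureTheory Set Filter
open scoped ProbabilityTheory ENNReal

/-- A subordinator: a nondecreasing right-continuous real-valued process started at `0`,
with stationary independent increments, drift `drift` and Lévy measure `levy`, whose
one-dimensional marginals are given by the Lévy–Khintchine formula. -/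
structure Subordinator (Ω : Type*) [MeasureSpace Ω] where
  X : ℝ → Ω → ℝ
  drift : ℝ
  levy : Measure ℝ
  drift_nonneg : 0 ≤ drift
  levy_supp : levy (Iic 0) = 0
  levy_int : ∫⁻ x in Ioi (0 : ℝ), ENNReal.ofReal (min x 1) ∂levy ≠ ⊤
  meas : ∀ t, Measurable (X t)
  init : ∀ ω, X 0 ω = 0
  mono : ∀ ω, MonotoneOn (fun t => X t ω) (Ici 0)
  rightCont : ∀ ω, ∀ t ≥ (0 : ℝ), ContinuousWithinAt (fun s => X s ω) (Ici t) t
  indep : ∀ s t : ℝ, 0 ≤ s → 0 ≤ t →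
    ProbabilityTheory.IndepFun (X s) (fun ω => X (s + t) ω - X s ω) ℙ
  stat : ∀ s t : ℝ, 0 ≤ s → 0 ≤ t →
    Measure.map (fun ω => X (s + t) ω - X s ω) ℙ = Measure.map (X t) ℙ
  laplace : ∀ t ≥ (0 : ℝ), ∀ l ≥ (0 : ℝ),
    ∫ ω, Real.exp (-(l * X t ω)) =
      Real.exp (-(t * (drift * l + ∫ x in Ioi (0 : ℝ), (1 - Real.exp (-(l * x))) ∂levy)))

variable {Ω : Type*} [MeasureSpace Ω]

/-- The process with `δ`-shortened jumps: every jump of size exceeding `δ` is shortened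
to have size exactly `δ` (pathwise: subtract the excess of each jump over `δ`). -/
noncomputable def Subordinator.shortened (S : Subordinator Ω) (δ t : ℝ) (ω : Ω) : ℝ :=
  S.X t ω - ∑' s : Ioc (0 : ℝ) t,
    max (S.X s ω - Function.leftLim (fun u => S.X u ω) s - δ) 0

/-- `L(t,δ) = X̃_t^δ / δ`, the rescaled `δ`-shortened process. -/
noncomputable def Subordinator.L (S : Subordinator Ω) (t δ : ℝ) (ω : Ω) : ℝ :=
  S.shortened δ t ω / δ

/-- `μ(δ) = (d + ∫₀^δ ν̄(x) dx)/δ = (d + ∫ (x∧δ) ν(dx))/δ`. -/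
noncomputable def Subordinator.mu (S : Subordinator Ω) (δ : ℝ) : ℝ :=
  (S.drift + ∫ x in Ioi (0 : ℝ), min x δ ∂S.levy) / δ

/-- `v(δ) = δ⁻¹ (∫ (x∧δ)² ν(dx))^{1/2}`. -/
noncomputable def Subordinator.v (S : Subordinator Ω) (δ : ℝ) : ℝ :=
  δ⁻¹ * Real.sqrt (∫ x in Ioi (0 : ℝ), (min x δ) ^ 2 ∂S.levy)



namespace ShortAux

/-- Target function `u⁻¹ 1_{u ≥ e⁻¹}`. -/
noncomputable def p0 (u : ℝ) : ℝ := if Real.exp (-1) ≤ u then u⁻¹ else 0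

/-- Limit functional (unnormalised). -/
noncomputable def B (α : ℝ) (f : ℝ → ℝ) : ℝ :=
  ∫ y in Ioi (0 : ℝ), f (Real.exp (-y)) * (Real.exp (-y) * y ^ (-α))

lemma w_int {α : ℝ} (hα : α < 1) :
    IntegrableOn (fun y : ℝ => Real.exp (-y) * y ^ (-α)) (Ioi 0) := by
  have := Real.GammaIntegral_convergent (s := 1 - α) (by linarith)
  simpa using this

lemma w_integral {α : ℝ} (hα : α < 1) : ∫ y in Ioi (0 : ℝ), Real.exp (-y) * y ^ (-α) = Real.Gamma (1 - α) := by
  rw [Real.Gamma_eq_integral (by linarith)]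
  simp

lemma exp_mem {y : ℝ} (hy : 0 < y) : Real.exp (-y) ∈ Icc (0 : ℝ) 1 :=
  ⟨(Real.exp_pos _).le, Real.exp_le_one_iff.2 (by linarith)⟩

lemma fw_int {α : ℝ} (hα : α < 1) {f : ℝ → ℝ} (hf : Measurable f) (C : ℝ)
    (hC : ∀ u ∈ Icc (0 : ℝ) 1, |f u| ≤ C) :
    IntegrableOn (fun y : ℝ => f (Real.exp (-y)) * (Real.exp (-y) * y ^ (-α))) (Ioi 0) := by
  refine Integrable.bdd_mul (w_int hα) (c := C) ?_ ?_
  · exact (hf.comp (by fun_prop)).aestronglyMeasurable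
  · refine (ae_restrict_mem measurableSet_Ioi).mono fun y hy => ?_
    exact hC _ (exp_mem hy)

lemma poly_bdd (p : Polynomial ℝ) : ∃ C, ∀ u ∈ Icc (0 : ℝ) 1, |p.eval u| ≤ C := by
  obtain ⟨C, hC⟩ := (isCompact_Icc (a := (0 : ℝ)) (b := 1)).exists_bound_of_continuousOn
    (f := fun u => p.eval u) p.continuous.continuousOn
  exact ⟨C, fun u hu => hC u hu⟩

lemma polyw_int {α : ℝ} (hα : α < 1) (p : Polynomial ℝ) :
    IntegrableOn (fun y : ℝ => p.eval (Real.exp (-y)) * (Real.exp (-y) * y ^ (-α))) (Ioi 0) := by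
  obtain ⟨C, hC⟩ := poly_bdd p
  exact fw_int hα (f := fun u => p.eval u) p.continuous.measurable C hC

lemma B_add {α : ℝ} (hα : α < 1) (p q : Polynomial ℝ) :
    B α (fun u => (p + q).eval u) = B α (fun u => p.eval u) + B α (fun u => q.eval u) := by
  unfold B
  rw [← integral_add (polyw_int hα p) (polyw_int hα q)]
  simp [add_mul]

lemma B_mono_exp {α : ℝ} (hα : α < 1) (n : ℕ) (a : ℝ) :
    B α (fun u => (Polynomial.monomial n a).eval u) =
      a * (((n : ℝ) + 1) ^ (α - 1) * Real.Gamma (1 - α)) := by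
  unfold B
  have h := Real.integral_rpow_mul_exp_neg_mul_Ioi (a := 1 - α) (r := (n : ℝ) + 1) (by linarith)
    (by positivity)
  rw [one_div, Real.inv_rpow (by positivity), ← Real.rpow_neg (by positivity)] at h
  rw [show α - 1 = -(1 - α) by ring, ← h, ← integral_const_mul]
  congr 1
  funext y
  beta_reduce
  rw [Polynomial.eval_monomial, ← Real.exp_nat_mul,
    show -(((n : ℝ) + 1) * y) = n * -y + -y by ring, Real.exp_add,
    show 1 - α - 1 = -α by ring]
  ring

lemma B_p0 {α : ℝ} (hα : α < 1) : B α p0 = 1 / (1 - α) := by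
  unfold B
  have h : ∀ y ∈ Ioi (0:ℝ), p0 (Real.exp (-y)) * (Real.exp (-y) * y ^ (-α)) =
      (Ioc (0:ℝ) 1).indicator (fun y => y ^ (-α)) y := by
    intro y hy
    have hy' : (0:ℝ) < y := hy
    unfold p0
    by_cases h1 : y ≤ 1
    · rw [if_pos (Real.exp_le_exp.2 (by linarith)), indicator_of_mem (show y ∈ Ioc (0:ℝ) 1 from ⟨hy', h1⟩), ← mul_assoc,
        inv_mul_cancel₀ (Real.exp_pos _).ne', one_mul]
    · rw [if_neg (by rw [Real.exp_le_exp]; linarith), indicator_of_notMem (fun h => h1 h.2), zero_mul]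
  rw [setIntegral_congr_fun measurableSet_Ioi h, setIntegral_indicator measurableSet_Ioc,
    inter_eq_self_of_subset_right Ioc_subset_Ioi_self,
    ← intervalIntegral.integral_of_le zero_le_one, integral_rpow (Or.inl (by linarith)),
    Real.one_rpow, Real.zero_rpow (by linarith)]
  rw [show -α + 1 = 1 - α by ring]; simp

/-- ramp with values in `[0,1]` -/
noncomputable def ramp (x : ℝ) : ℝ := max 0 (min 1 x)

lemma ramp_cont : Continuous ramp := by unfold ramp; fun_prop
lemma ramp_nonneg (x : ℝ) : 0 ≤ ramp x := le_max_left _ _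
lemma ramp_le (x : ℝ) : ramp x ≤ 1 := max_le zero_le_one (min_le_left _ _)
lemma ramp_one {x : ℝ} (h : 1 ≤ x) : ramp x = 1 := by simp [ramp, h]
lemma ramp_zero {x : ℝ} (h : x ≤ 0) : ramp x = 0 := by
  unfold ramp; rw [min_eq_right (by linarith), max_eq_left h]

/-- approximants -/
noncomputable def g (s : ℝ) (n : ℕ) (u : ℝ) : ℝ :=
  (max u (Real.exp (-1)))⁻¹ * ramp (s + n * (u - Real.exp (-1)))

lemma g_cont (s : ℝ) (n : ℕ) : Continuous (g s n) := by
  unfold g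
  refine Continuous.mul (Continuous.inv₀ (by fun_prop) fun u => ?_) (ramp_cont.comp (by fun_prop))
  exact (lt_max_of_lt_right (Real.exp_pos _)).ne'

lemma g_bdd (s : ℝ) (n : ℕ) (u : ℝ) : |g s n u| ≤ Real.exp 1 := by
  unfold g
  have h : 0 < max u (Real.exp (-1)) := lt_max_of_lt_right (Real.exp_pos _)
  rw [abs_of_nonneg (mul_nonneg (inv_nonneg.2 h.le) (ramp_nonneg _))]
  calc _ ≤ (Real.exp (-1))⁻¹ * 1 :=
        mul_le_mul (inv_anti₀ (Real.exp_pos _) (le_max_right _ _)) (ramp_le _) (ramp_nonneg _)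
          (by positivity)
    _ = _ := by rw [← Real.exp_neg]; simp

lemma g_upper (n : ℕ) (u : ℝ) : p0 u ≤ g 1 n u := by
  unfold p0 g
  split_ifs with h
  · rw [max_eq_left h, ramp_one, mul_one]
    have : (0:ℝ) ≤ n * (u - Real.exp (-1)) := mul_nonneg (by positivity) (by linarith)
    linarith
  · exact mul_nonneg (inv_nonneg.2 (le_max_of_le_right (Real.exp_pos _).le)) (ramp_nonneg _)

lemma g_lower (n : ℕ) (u : ℝ) : g 0 n u ≤ p0 u := by
  unfold p0 g
  split_ifs with h
  · rw [max_eq_left h]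
    exact mul_le_of_le_one_right (inv_nonneg.2 ((Real.exp_pos _).le.trans h)) (ramp_le _)
  · rw [ramp_zero, mul_zero]
    push Not at h
    have : (n:ℝ) * (u - Real.exp (-1)) ≤ 0 := mul_nonpos_of_nonneg_of_nonpos (by positivity) (by linarith)
    linarith

lemma g_lim (s : ℝ) {u : ℝ} (hu : u ≠ Real.exp (-1)) :
    Tendsto (fun n => g s n u) atTop (nhds (p0 u)) := by
  apply tendsto_const_nhds.congr'
  rcases lt_or_gt_of_ne hu with h | h
  · have h1 : Tendsto (fun n : ℕ => (n:ℝ) * (Real.exp (-1) - u)) atTop atTop :=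
      tendsto_natCast_atTop_atTop.atTop_mul_const (by linarith)
    filter_upwards [h1.eventually_ge_atTop s] with n hn
    unfold p0 g
    rw [if_neg (by linarith), ramp_zero (by linarith), mul_zero]
  · have h1 : Tendsto (fun n : ℕ => (n:ℝ) * (u - Real.exp (-1))) atTop atTop :=
      tendsto_natCast_atTop_atTop.atTop_mul_const (by linarith)
    filter_upwards [h1.eventually_ge_atTop (1 - s)] with n hn
    unfold p0 g
    rw [if_pos h.le, ramp_one (by linarith), mul_one, max_eq_left h.le]

lemma Bg_lim {α : ℝ} (hα : α < 1) (s : ℝ) :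
    Tendsto (fun n => B α (g s n)) atTop (nhds (B α p0)) := by
  unfold B
  refine tendsto_integral_of_dominated_convergence
    (fun y => Real.exp 1 * (Real.exp (-y) * y ^ (-α))) ?_ ?_ ?_ ?_
  · intro n
    exact (fw_int hα (g_cont s n).measurable _ (fun u _ => g_bdd s n u)).aestronglyMeasurable
  · exact (w_int hα).const_mul _
  · intro n
    refine (ae_restrict_mem measurableSet_Ioi).mono fun y hy => ?_
    have hy' : (0:ℝ) < y := hy
    have : 0 ≤ Real.exp (-y) * y ^ (-α) := by positivity
    rw [norm_mul, Real.norm_of_nonneg this]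
    exact mul_le_mul_of_nonneg_right (g_bdd s n _) this
  · have : ∀ᵐ y ∂(volume.restrict (Ioi (0:ℝ))), y ≠ 1 :=
      ae_restrict_of_ae (by simp [ae_iff])
    filter_upwards [this] with y hy
    refine (g_lim s ?_).mul_const _
    intro h
    rw [Real.exp_eq_exp] at h
    exact hy (by linarith)

lemma poly_near {α : ℝ} (hα : α < 1) {f : ℝ → ℝ} (hf : Continuous f) (C : ℝ)
    (hC : ∀ u ∈ Icc (0 : ℝ) 1, |f u| ≤ C) {η : ℝ} (hη : 0 < η) :
    (∃ p : Polynomial ℝ, (∀ u ∈ Icc (0:ℝ) 1, f u ≤ p.eval u) ∧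
      B α (fun u => p.eval u) ≤ B α f + 2 * η * Real.Gamma (1 - α)) ∧
    (∃ p : Polynomial ℝ, (∀ u ∈ Icc (0:ℝ) 1, p.eval u ≤ f u) ∧
      B α f - 2 * η * Real.Gamma (1 - α) ≤ B α (fun u => p.eval u)) := by
  obtain ⟨q, hq⟩ := exists_polynomial_near_of_continuousOn 0 1 f hf.continuousOn η hη
  have hi := fw_int hα hf.measurable C hC
  have hw := (w_int hα).const_mul (2 * η)
  constructor
  · refine ⟨q + Polynomial.C η, fun u hu => ?_, ?_⟩
    · have := abs_lt.1 (hq u hu); simp; linarith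
    · rw [← w_integral hα, ← integral_const_mul]
      unfold B
      rw [← integral_add hi hw]
      refine setIntegral_mono_on (polyw_int hα _) (hi.add hw) measurableSet_Ioi fun y hy => ?_
      have hy' : (0:ℝ) < y := hy
      have h0 : 0 ≤ Real.exp (-y) * y ^ (-α) := by positivity
      have := abs_lt.1 (hq _ (exp_mem hy'))
      beta_reduce
      rw [← add_mul]
      refine mul_le_mul_of_nonneg_right ?_ h0
      simp; linarith
  · refine ⟨q - Polynomial.C η, fun u hu => ?_, ?_⟩
    · have := abs_lt.1 (hq u hu); simp; linarith
    · rw [← w_integral hα, ← integral_const_mul]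
      unfold B
      rw [← integral_sub hi hw]
      refine setIntegral_mono_on (hi.sub hw) (polyw_int hα _) measurableSet_Ioi fun y hy => ?_
      have hy' : (0:ℝ) < y := hy
      have h0 : 0 ≤ Real.exp (-y) * y ^ (-α) := by positivity
      have := abs_lt.1 (hq _ (exp_mem hy'))
      beta_reduce
      rw [← sub_mul]
      refine mul_le_mul_of_nonneg_right ?_ h0
      simp; linarith

lemma exists_upper {α : ℝ} (hα : α < 1) {b : ℝ} (hb : B α p0 < b) :
    ∃ p : Polynomial ℝ, (∀ u ∈ Icc (0:ℝ) 1, p0 u ≤ p.eval u) ∧ B α (fun u => p.eval u) < b := by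
  obtain ⟨n, hn⟩ := ((Bg_lim hα 1).eventually_lt_const hb).exists
  have hG : 0 < Real.Gamma (1 - α) := Real.Gamma_pos_of_pos (by linarith)
  obtain ⟨p, h1, h2⟩ := (poly_near hα (g_cont 1 n) _ (fun u _ => g_bdd 1 n u)
    (η := (b - B α (g 1 n)) / (4 * Real.Gamma (1 - α))) (by have := sub_pos.2 hn; positivity)).1
  refine ⟨p, fun u hu => (g_upper n u).trans (h1 u hu), h2.trans_lt ?_⟩
  field_simp
  linarith

lemma exists_lower {α : ℝ} (hα : α < 1) {b : ℝ} (hb : b < B α p0) :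
    ∃ p : Polynomial ℝ, (∀ u ∈ Icc (0:ℝ) 1, p.eval u ≤ p0 u) ∧ b < B α (fun u => p.eval u) := by
  obtain ⟨n, hn⟩ := ((Bg_lim hα 0).eventually_const_lt hb).exists
  have hG : 0 < Real.Gamma (1 - α) := Real.Gamma_pos_of_pos (by linarith)
  obtain ⟨p, h1, h2⟩ := (poly_near hα (g_cont 0 n) _ (fun u _ => g_bdd 0 n u)
    (η := (B α (g 0 n) - b) / (4 * Real.Gamma (1 - α))) (by have := sub_pos.2 hn; positivity)).2
  refine ⟨p, fun u hu => (h1 u hu).trans (g_lower n u), lt_of_lt_of_le ?_ h2⟩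
  field_simp
  linarith

lemma p0_ii {a b : ℝ} : IntervalIntegrable p0 volume a b := by
  have hm : Measurable p0 := by
    unfold p0
    exact Measurable.ite measurableSet_Ici measurable_inv measurable_const
  refine (intervalIntegrable_const (c := Real.exp 1)).mono_fun hm.aestronglyMeasurable ?_
  refine Eventually.of_forall fun u => ?_
  beta_reduce
  unfold p0
  split_ifs with h
  · have h0 := (Real.exp_pos (-1)).trans_le h
    have h2 := inv_anti₀ (Real.exp_pos _) h
    rw [← Real.exp_neg, neg_neg] at h2
    rw [Real.norm_of_nonneg (by positivity), Real.norm_of_nonneg (by positivity)]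
    exact h2
  · simp [(Real.exp_pos 1).le]

lemma p0_integral {z : ℝ} (hz : 0 < z) : ∫ u in Real.exp (-z)..1, p0 u = min z 1 := by
  have key : ∀ z : ℝ, 0 ≤ z → z ≤ 1 → ∫ u in Real.exp (-z)..1, p0 u = z := by
    intro z h0 h1
    have hle : Real.exp (-z) ≤ 1 := Real.exp_le_one_iff.2 (by linarith)
    have : ∫ u in Real.exp (-z)..1, p0 u = ∫ u in Real.exp (-z)..1, u⁻¹ := by
      refine intervalIntegral.integral_congr fun u hu => ?_
      rw [uIcc_of_le hle] at hu
      have : Real.exp (-1) ≤ Real.exp (-z) := Real.exp_le_exp.2 (by linarith)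
      simp only [p0, if_pos (this.trans hu.1)]
    rw [this, integral_inv_of_pos (Real.exp_pos _) one_pos, one_div, ← Real.exp_neg, Real.log_exp,
      neg_neg]
  rcases le_total z 1 with h | h
  · rw [min_eq_left h, key z hz.le h]
  · rw [min_eq_right h, ← intervalIntegral.integral_add_adjacent_intervals (b := Real.exp (-1))
      p0_ii p0_ii, key 1 zero_le_one le_rfl]
    have hle : Real.exp (-z) ≤ Real.exp (-1) := Real.exp_le_exp.2 (by linarith)
    rw [intervalIntegral.integral_of_le hle, integral_Ioc_eq_integral_Ioo,
      setIntegral_congr_fun (g := fun _ => (0:ℝ)) measurableSet_Ioo]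
    · simp
    · intro u hu
      simp only [p0, if_neg (not_le.2 hu.2)]

section nu

variable {ν : Measure ℝ}

lemma min_int (hν : IntegrableOn (fun x : ℝ => min x 1) (Ioi 0) ν) {l : ℝ} (hl : 0 < l) :
    IntegrableOn (fun x : ℝ => min (l * x) 1) (Ioi 0) ν := by
  refine Integrable.mono' (hν.const_mul (max l 1)) (by fun_prop) ?_
  refine (ae_restrict_mem measurableSet_Ioi).mono fun x hx => ?_
  have hx' : (0:ℝ) < x := hx
  rw [Real.norm_of_nonneg (by positivity)]
  rcases le_total x 1 with h | h
  · rw [min_eq_left h]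
    exact (min_le_left _ _).trans (mul_le_mul_of_nonneg_right (le_max_left _ _) hx'.le)
  · rw [min_eq_right h, mul_one]
    exact (min_le_right _ _).trans (le_max_right _ _)

lemma exp_int (hν : IntegrableOn (fun x : ℝ => min x 1) (Ioi 0) ν) {l : ℝ} (hl : 0 < l) :
    IntegrableOn (fun x : ℝ => 1 - Real.exp (-(l * x))) (Ioi 0) ν := by
  refine Integrable.mono' (min_int hν hl) (by fun_prop) ?_
  refine (ae_restrict_mem measurableSet_Ioi).mono fun x hx => ?_
  have hx' : (0:ℝ) < x := hx
  have h1 : Real.exp (-(l * x)) ≤ 1 := (exp_mem (by positivity)).2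
  rw [Real.norm_of_nonneg (by linarith)]
  refine le_min ?_ ?_
  · have := Real.add_one_le_exp (-(l * x)); linarith
  · have := Real.exp_pos (-(l * x)); linarith

/-- `J p l = ∫ (∫_{e^{-lx}}^1 p) dν`. -/
noncomputable def J (ν : Measure ℝ) (p : Polynomial ℝ) (l : ℝ) : ℝ :=
  ∫ x in Ioi (0:ℝ), (∫ u in Real.exp (-(l * x))..1, p.eval u) ∂ν

lemma inner_monomial (n : ℕ) (a l x : ℝ) :
    ∫ u in Real.exp (-(l * x))..1, (Polynomial.monomial n a).eval u =
      (a / ((n:ℝ) + 1)) * (1 - Real.exp (-((((n:ℝ) + 1) * l) * x))) := by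
  simp only [Polynomial.eval_monomial]
  rw [intervalIntegral.integral_const_mul, integral_pow, ← Real.exp_nat_mul]
  push_cast
  rw [show ((n:ℝ) + 1) * -(l * x) = -((((n:ℝ) + 1) * l) * x) by ring]
  simp
  ring

lemma inner_add (p q : Polynomial ℝ) (v : ℝ) :
    ∫ u in v..1, (p + q).eval u = (∫ u in v..1, p.eval u) + ∫ u in v..1, q.eval u := by
  rw [← intervalIntegral.integral_add (p.continuous.intervalIntegrable _ _)
    (q.continuous.intervalIntegrable _ _)]
  simp

lemma inner_int (hν : IntegrableOn (fun x : ℝ => min x 1) (Ioi 0) ν) {l : ℝ} (hl : 0 < l)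
    (p : Polynomial ℝ) :
    IntegrableOn (fun x : ℝ => ∫ u in Real.exp (-(l * x))..1, p.eval u) (Ioi 0) ν := by
  induction p using Polynomial.induction_on' with
  | add p q hp hq =>
    simp only [inner_add]
    exact hp.add hq
  | monomial n a =>
    simp only [inner_monomial]
    exact (exp_int hν (by positivity)).const_mul _

lemma J_lim (hν : IntegrableOn (fun x : ℝ => min x 1) (Ioi 0) ν) {α : ℝ} (hα : α < 1)
    {F : ℝ → ℝ} (hF : ∀ x : ℝ, 0 < x → 0 < F x)
    (hFslow : ∀ c : ℝ, 0 < c → Tendsto (fun lam : ℝ => F (c * lam) / F lam) atTop (nhds 1))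
    (hRV : Tendsto (fun lam : ℝ =>
        (∫ x in Ioi (0 : ℝ), (1 - Real.exp (-(lam * x))) ∂ν) / (lam ^ α * F lam)) atTop (nhds 1))
    (p : Polynomial ℝ) :
    Tendsto (fun l => J ν p l / (l ^ α * F l)) atTop
      (nhds (B α (fun u => p.eval u) / Real.Gamma (1 - α))) := by
  have hG : 0 < Real.Gamma (1 - α) := Real.Gamma_pos_of_pos (by linarith)
  induction p using Polynomial.induction_on' with
  | add p q hp hq =>
    rw [B_add hα, add_div]
    refine (hp.add hq).congr' ?_
    filter_upwards [eventually_gt_atTop 0] with l hl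
    rw [← add_div]
    congr 1
    unfold J
    simp only [inner_add]
    exact (integral_add (inner_int hν hl p) (inner_int hν hl q)).symm
  | monomial n a =>
    have hn : (0:ℝ) < (n:ℝ) + 1 := by positivity
    have h1 := hRV.comp (tendsto_id.const_mul_atTop hn)
    have h2 := ((h1.mul (hFslow _ hn)).const_mul (a * ((n:ℝ) + 1) ^ (α - 1)))
    rw [B_mono_exp hα]
    have e : a * (((n:ℝ) + 1) ^ (α - 1) * Real.Gamma (1 - α)) / Real.Gamma (1 - α) =
      a * ((n:ℝ) + 1) ^ (α - 1) * (1 * 1) := by field_simp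
    rw [e]
    refine h2.congr' ?_
    filter_upwards [eventually_gt_atTop 0] with l hl
    have hFl := hF l hl
    have hFl2 := hF (((n:ℝ) + 1) * l) (by positivity)
    unfold J
    simp only [inner_monomial, Function.comp, id]
    rw [integral_const_mul, Real.mul_rpow hn.le hl.le, Real.rpow_sub_one hn.ne']
    have := Real.rpow_pos_of_pos hn α
    have := Real.rpow_pos_of_pos hl α
    field_simp

lemma J0_lim (hν : IntegrableOn (fun x : ℝ => min x 1) (Ioi 0) ν) {α : ℝ} (hα : α < 1)
    {F : ℝ → ℝ} (hF : ∀ x : ℝ, 0 < x → 0 < F x)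
    (hFslow : ∀ c : ℝ, 0 < c → Tendsto (fun lam : ℝ => F (c * lam) / F lam) atTop (nhds 1))
    (hRV : Tendsto (fun lam : ℝ =>
        (∫ x in Ioi (0 : ℝ), (1 - Real.exp (-(lam * x))) ∂ν) / (lam ^ α * F lam)) atTop (nhds 1)) :
    Tendsto (fun l => (∫ x in Ioi (0:ℝ), min (l * x) 1 ∂ν) / (l ^ α * F l)) atTop
      (nhds (1 / Real.Gamma (2 - α))) := by
  have hG : 0 < Real.Gamma (1 - α) := Real.Gamma_pos_of_pos (by linarith)
  have e : 1 / Real.Gamma (2 - α) = B α p0 / Real.Gamma (1 - α) := by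
    rw [B_p0 hα, show 2 - α = (1 - α) + 1 by ring, Real.Gamma_add_one (by linarith)]
    field_simp
  rw [e]
  have hN : ∀ l : ℝ, 0 < l → 0 < l ^ α * F l := fun l hl =>
    mul_pos (Real.rpow_pos_of_pos hl α) (hF l hl)
  have hsub : ∀ z : ℝ, 0 < z → ∀ u ∈ Icc (Real.exp (-z)) 1, u ∈ Icc (0:ℝ) 1 :=
    fun z hz u hu => ⟨(Real.exp_pos _).le.trans hu.1, hu.2⟩
  refine tendsto_order.2 ⟨fun b hb => ?_, fun b hb => ?_⟩
  · rw [lt_div_iff₀ hG] at hb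
    obtain ⟨p, hp, hpB⟩ := exists_lower hα hb
    rw [← lt_div_iff₀ hG] at hpB
    filter_upwards [(J_lim hν hα hF hFslow hRV p).eventually_const_lt hpB, eventually_gt_atTop 0]
      with l h1 hl
    refine h1.trans_le (div_le_div_of_nonneg_right ?_ (hN l hl).le)
    refine setIntegral_mono_on (inner_int hν hl p) (min_int hν hl) measurableSet_Ioi fun x hx => ?_
    have hz : 0 < l * x := mul_pos hl hx
    rw [← p0_integral hz]
    exact intervalIntegral.integral_mono_on (exp_mem hz).2 (p.continuous.intervalIntegrable _ _)
      p0_ii fun u hu => hp u (hsub _ hz u hu)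
  · rw [gt_iff_lt, div_lt_iff₀ hG] at hb
    obtain ⟨p, hp, hpB⟩ := exists_upper hα hb
    rw [← div_lt_iff₀ hG] at hpB
    filter_upwards [(J_lim hν hα hF hFslow hRV p).eventually_lt_const hpB, eventually_gt_atTop 0]
      with l h1 hl
    refine lt_of_le_of_lt (div_le_div_of_nonneg_right ?_ (hN l hl).le) h1
    refine setIntegral_mono_on (min_int hν hl) (inner_int hν hl p) measurableSet_Ioi fun x hx => ?_
    have hz : 0 < l * x := mul_pos hl hx
    rw [← p0_integral hz]
    exact intervalIntegral.integral_mono_on (exp_mem hz).2 p0_ii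
      (p.continuous.intervalIntegrable _ _) fun u hu => hp u (hsub _ hz u hu)

end nu

end ShortAux

/-- If the Laplace exponent of a driftless subordinator is regularly varying at infinity,
`Φ(λ) ~ λ^α F(λ)` with `α ∈ (0,1)` and `F` slowly varying, and `L(t,δ)/μ(δ) → t`
almost surely, then almost surely `L(t,δ) ~ t δ^{−α} F(1/δ)/Γ(2−α)` as `δ → 0`. -/
theorem shortened_process_regular_variation [IsProbabilityMeasure (ℙ : Measure Ω)]
    (S : Subordinator Ω) (hdrift : S.drift = 0)
    (hinf : S.levy (Ioi (0 : ℝ)) = ⊤)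
    (α : ℝ) (hα : α ∈ Ioo (0 : ℝ) 1) (F : ℝ → ℝ)
    (hF : ∀ x : ℝ, 0 < x → 0 < F x)
    (hFslow : ∀ c : ℝ, 0 < c → Tendsto (fun lam : ℝ => F (c * lam) / F lam) atTop (nhds 1))
    (hRV : Tendsto (fun lam : ℝ =>
        (S.drift * lam + ∫ x in Ioi (0 : ℝ), (1 - Real.exp (-(lam * x))) ∂S.levy) /
          (lam ^ α * F lam))
      atTop (nhds 1))
    (t : ℝ) (ht : 0 < t)
    (has : ∀ᵐ ω ∂(ℙ : Measure Ω),
      Tendsto (fun δ : ℝ => S.L t δ ω / S.mu δ) (nhdsWithin 0 (Ioi 0)) (nhds t)) :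
    ∀ᵐ ω ∂(ℙ : Measure Ω),
      Tendsto (fun δ : ℝ =>
          S.L t δ ω / (t * δ ^ (-α) * F (1 / δ) / Real.Gamma (2 - α)))
        (nhdsWithin 0 (Ioi 0)) (nhds 1) := by
  have hα1 := hα.2
  have hν : IntegrableOn (fun x : ℝ => min x 1) (Ioi 0) S.levy := by
    refine ⟨by fun_prop, ?_⟩
    rw [hasFiniteIntegral_iff_ofReal]
    · exact lt_top_iff_ne_top.2 S.levy_int
    · exact (ae_restrict_mem measurableSet_Ioi).mono fun x hx => le_min (le_of_lt hx) zero_le_one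
  simp only [hdrift, zero_mul, zero_add] at hRV
  have hlim := (ShortAux.J0_lim hν hα1 hF hFslow hRV).comp tendsto_inv_nhdsGT_zero
  have hG : 0 < Real.Gamma (2 - α) := Real.Gamma_pos_of_pos (by linarith)
  have hmu : Tendsto (fun δ : ℝ => S.mu δ / (δ ^ (-α) * F (1 / δ))) (nhdsWithin 0 (Ioi 0))
      (nhds (1 / Real.Gamma (2 - α))) := by
    refine hlim.congr' ?_
    filter_upwards [self_mem_nhdsWithin] with δ hδ
    have hδ' : (0:ℝ) < δ := hδ
    simp only [Function.comp, Subordinator.mu, hdrift, zero_add]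
    rw [Real.inv_rpow hδ'.le, ← Real.rpow_neg hδ'.le, one_div]
    congr 1
    rw [div_eq_inv_mul, ← integral_const_mul]
    congr 1
    funext x
    rw [mul_min_of_nonneg _ _ (inv_nonneg.2 hδ'.le), inv_mul_cancel₀ hδ'.ne']
  filter_upwards [has] with ω hω
  have h := (hω.mul hmu).mul_const (Real.Gamma (2 - α) / t)
  have e : t * (1 / Real.Gamma (2 - α)) * (Real.Gamma (2 - α) / t) = 1 := by field_simp
  rw [e] at h
  refine h.congr' ?_
  filter_upwards [self_mem_nhdsWithin, hmu.eventually_const_lt (one_div_pos.2 hG)] with δ hδ hpos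
  have hδ' : (0:ℝ) < δ := hδ
  have hm : S.mu δ ≠ 0 := by
    intro h0
    simp [h0] at hpos
  have h1 := Real.rpow_pos_of_pos hδ' (-α)
  have h2 := hF (1 / δ) (by positivity)
  generalize δ ^ (-α) = a at *
  generalize F (1 / δ) = b at *
  field_simp
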